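/- Let d ≥ 1 be an integer. There exists a constant C = C(d) > 0 such that for every s ∈ ℝ, every 1 ≤ p, r ≤ ∞, every 1 ≤ q₁ ≤ ∞, and every a ∈ 𝒮(ℝ^d), the Poisson extension u(x, t) := (2π)^{−d} ∫_{ℝ^d} e^{i x·ξ} e^{−t|ξ|} F[a](ξ) dξ (for x ∈ ℝ^d, t > 0) satisfies ‖u‖_{L̃^{q₁}(Ḃ^{s + 1/q₁}_{p,r})} ≤ C ‖a‖_{Ḃ^s_{p,r}}, with the convention 1/∞ = 0. (Maximal regularity estimate for the boundary semigroup e^{−t|∇|} in Chemin–Lerner spaces.) -/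

import Mathlib

/-!
On the `j`-th Littlewood–Paley block the frequencies have size about `2^j`, so there `e^{-t|∇|}` is
convolution with an `L¹`-normalized dilation by `2^j` of a kernel `K_τ`, `τ ∼ 2^j t`. The Fourier
transform of `K_τ` is `e^{-τ|v|} χ(v)` with a cutoff `χ` supported where `|v| ≥ 2δ > 0`. Since the
symbols `e^{-τ(|v|-δ)} χ(v)` are bounded in the Schwartz space uniformly in `τ ≥ 0`, and the `L¹`
norm of the inverse Fourier transform is a continuous seminorm there, `‖K_τ‖_{L¹} ≤ C e^{-δτ}`.
Young's inequality in `x` then makes `‖Δ_j u(t)‖_p` decay like `e^{-δ 2^j t}`, and the `L^q` norm of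
this exponential in time is at most a constant times `2^{-j/q}`, uniformly in `q`: this is the gain
of `1/q` derivatives.
-/

open MeasureTheory Filter Complex
open scoped ENNReal NNReal RealInnerProductSpace Topology

noncomputable section

abbrev Rd (d : ℕ) := EuclideanSpace ℝ (Fin d)

/-- Fourier transform with the paper's convention `F[f](ξ) = ∫ e^{-i x·ξ} f(x) dx`. -/
def FT {d : ℕ} (f : Rd d → ℂ) (ξ : Rd d) : ℂ :=
  ∫ x : Rd d, Complex.exp (-Complex.I * (↑(⟪x, ξ⟫) : ℂ)) * f x

/-- A Littlewood–Paley family: a Schwartz function `φ₀` whose Fourier transform is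
real, takes values in `[0,1]`, is supported in the annulus `1/2 ≤ |ξ| ≤ 2`, and whose
dyadic dilates sum to `1` away from the origin. -/
structure LPData (d : ℕ) where
  φ : SchwartzMap (Rd d) ℂ
  him : ∀ ξ : Rd d, (FT (⇑φ) ξ).im = 0
  h0 : ∀ ξ : Rd d, 0 ≤ (FT (⇑φ) ξ).re
  h1 : ∀ ξ : Rd d, (FT (⇑φ) ξ).re ≤ 1
  hsupp : ∀ ξ : Rd d, FT (⇑φ) ξ ≠ 0 → (1/2 : ℝ) ≤ ‖ξ‖ ∧ ‖ξ‖ ≤ 2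
  hsum : ∀ ξ : Rd d, ξ ≠ 0 → HasSum (fun j : ℤ => FT (⇑φ) ((2:ℝ) ^ (-j) • ξ)) 1

/-- Littlewood–Paley block `Δ_j f = φ_j * f`, where `φ_j(x) = 2^{dj} φ₀(2^j x)`. -/
def LP {d : ℕ} (P : LPData d) (j : ℤ) (f : Rd d → ℂ) (x : Rd d) : ℂ :=
  ∫ y : Rd d, (((2:ℝ) ^ ((d : ℤ) * j) : ℝ) : ℂ) * P.φ ((2:ℝ) ^ j • y) * f (x - y)

/-- `ℓ^r(ℤ)`-norm of a family of extended nonnegative reals. -/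
def ellNorm (r : ℝ≥0∞) (a : ℤ → ℝ≥0∞) : ℝ≥0∞ :=
  if r = ∞ then ⨆ j, a j else (∑' j, a j ^ r.toReal) ^ (1 / r.toReal)

/-- Homogeneous Besov norm `‖f‖_{Ḃ^s_{p,r}}`. -/
def besov {d : ℕ} (P : LPData d) (s : ℝ) (p r : ℝ≥0∞) (f : Rd d → ℂ) : ℝ≥0∞ :=
  ellNorm r fun j => ENNReal.ofReal ((2:ℝ) ^ (s * (j:ℝ))) * eLpNorm (LP P j f) p volume

/-- Mixed norm `L^q_t(0,∞; L^p_x)`. -/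
def LqLp {d : ℕ} (q p : ℝ≥0∞) (g : ℝ → Rd d → ℂ) : ℝ≥0∞ :=
  if q = ∞ then essSup (fun t => eLpNorm (g t) p volume) (volume.restrict (Set.Ioi (0:ℝ)))
  else (∫⁻ t in Set.Ioi (0:ℝ), (eLpNorm (g t) p volume) ^ q.toReal) ^ (1 / q.toReal)

/-- Chemin–Lerner norm `‖f‖_{L̃^q(Ḃ^s_{p,r})}` on `ℝ^d × (0,∞)`. -/
def CL {d : ℕ} (P : LPData d) (s : ℝ) (q p r : ℝ≥0∞) (f : ℝ → Rd d → ℂ) : ℝ≥0∞ :=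
  ellNorm r fun j => ENNReal.ofReal ((2:ℝ) ^ (s * (j:ℝ))) * LqLp q p fun t => LP P j (f t)

/-- `f : ℝ^d × (0,∞) → ℂ` (curried as `f t x`) is slice-Schwartz: continuous on
`ℝ^d × (0,∞)` and Schwartz in `x` for each fixed `t > 0`. -/
def SliceSchwartz {d : ℕ} (f : ℝ → Rd d → ℂ) : Prop :=
  ContinuousOn (fun z : Rd d × ℝ => f z.2 z.1) (Set.univ ×ˢ Set.Ioi 0) ∧
  ∀ t : ℝ, 0 < t → ∃ g : SchwartzMap (Rd d) ℂ, f t = ⇑g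

open scoped FourierTransform SchwartzMap ContDiff Convolution
open Module (finrank)

/-! ### Kernels of localized exponential symbols -/

section Symbols

variable {E F : Type*} [NormedAddCommGroup E] [NormedSpace ℝ E]
  [NormedAddCommGroup F] [NormedSpace ℝ F]

lemma norm_iteratedFDeriv_exp_neg_mul_le {c τ r : ℝ} (hc : 0 < c) (hτ : 0 ≤ τ) (hr : c ≤ r)
    (i : ℕ) :
    ‖iteratedFDeriv ℝ i (fun x : ℝ => Real.exp (-τ * x)) r‖ ≤ i.factorial / c ^ i := by
  have hτr : τ * c ≤ τ * r := by gcongr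
  have hpow : (τ * c) ^ i / i.factorial ≤ Real.exp (τ * r) :=
    (Real.pow_div_factorial_le_exp _ (mul_nonneg hτ hc.le) i).trans (Real.exp_le_exp.2 hτr)
  rw [norm_iteratedFDeriv_eq_norm_iteratedDeriv, iteratedDeriv_exp_const_mul, norm_mul, norm_pow,
    norm_neg, Real.norm_of_nonneg hτ, Real.norm_of_nonneg (Real.exp_pos _).le, neg_mul,
    Real.exp_neg, ← div_eq_mul_inv, div_le_div_iff₀ (Real.exp_pos _) (by positivity), ← mul_pow]
  rwa [div_le_iff₀' (by positivity)] at hpow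

lemma exists_forall_norm_iteratedFDeriv_le {f : E → F} (hf : ContDiff ℝ ∞ f) {S : Set E}
    (hS : IsCompact S) (n : ℕ) :
    ∃ D : ℝ, 1 ≤ D ∧ ∀ i ≤ n, ∀ x ∈ S, ‖iteratedFDeriv ℝ i f x‖ ≤ D := by
  have hbound (i : ℕ) : ∃ D : ℝ, ∀ x ∈ S, ‖iteratedFDeriv ℝ i f x‖ ≤ D :=
    hS.exists_bound_of_continuousOn
      (hf.continuous_iteratedFDeriv (by exact_mod_cast le_top)).continuousOn
  choose D hD using hbound
  obtain ⟨M, hM⟩ := ((Set.finite_Iic n).image D).bddAbove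
  refine ⟨max 1 M, le_max_left _ _, fun i hi x hx => (hD i x hx).trans ?_⟩
  exact (hM (Set.mem_image_of_mem D hi)).trans (le_max_right _ _)

/-- The powers of `τ` produced by the chain rule are absorbed by `e^{-τρ}`. -/
lemma exists_forall_norm_iteratedFDeriv_exp_smul_le {χ : E → F} {ρ : E → ℝ}
    (hχ : ContDiff ℝ ∞ χ) (hχc : HasCompactSupport χ) (hρ : ContDiff ℝ ∞ ρ)
    (hρ0 : ∀ x ∈ tsupport χ, 0 < ρ x) (n : ℕ) :
    ∃ B : ℝ, ∀ τ : ℝ, 0 ≤ τ → ∀ x,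
      ‖iteratedFDeriv ℝ n (fun x => Real.exp (-τ * ρ x) • χ x) x‖ ≤ B := by
  obtain ⟨c, hc, hcρ⟩ := hχc.isCompact.exists_forall_le' hρ.continuous.continuousOn hρ0
  obtain ⟨D, hD1, hD⟩ := exists_forall_norm_iteratedFDeriv_le hρ hχc n
  obtain ⟨X, hX1, hX⟩ := exists_forall_norm_iteratedFDeriv_le hχ hχc n
  obtain ⟨A, hA⟩ := ((Set.finite_Iic n).image fun i => (i.factorial / c ^ i : ℝ)).bddAbove
  have hA0 : 0 ≤ A :=
    (by positivity : (0 : ℝ) ≤ (0).factorial / c ^ 0).trans (hA ⟨0, by simp, rfl⟩)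
  refine ⟨∑ i ∈ Finset.range (n + 1), (n.choose i : ℝ) * (i.factorial * A * D ^ i) * X,
    fun τ hτ x => ?_⟩
  by_cases hx : x ∈ tsupport χ
  · have hg : ContDiff ℝ ∞ fun r : ℝ => Real.exp (-τ * r) := by fun_prop
    have hexp : ContDiff ℝ ∞ fun x => Real.exp (-τ * ρ x) := hg.comp hρ
    refine (norm_iteratedFDeriv_smul_le hexp hχ x (by exact_mod_cast le_top)).trans
      (Finset.sum_le_sum fun i hi => ?_)
    have hin : i ≤ n := Finset.mem_range_succ_iff.1 hi
    have hchain : ‖iteratedFDeriv ℝ i (fun x => Real.exp (-τ * ρ x)) x‖ ≤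
        i.factorial * A * D ^ i := by
      refine norm_iteratedFDeriv_comp_le (g := fun r : ℝ => Real.exp (-τ * r)) hg hρ
        (WithTop.coe_le_coe.2 le_top) x (fun k hk => ?_) fun k hk1 hk => ?_
      · exact (norm_iteratedFDeriv_exp_neg_mul_le hc hτ (hcρ x hx) k).trans
          (hA ⟨k, hk.trans hin, rfl⟩)
      · exact (hD k (hk.trans hin) x hx).trans (le_self_pow₀ hD1 (by omega))
    gcongr
    exact hX (n - i) (Nat.sub_le _ _) x hx
  · have hx' : x ∉ tsupport fun x => Real.exp (-τ * ρ x) • χ x :=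
      fun h => hx (tsupport_smul_subset_right _ _ h)
    rw [image_eq_zero_of_notMem_tsupport fun h => hx' (tsupport_iteratedFDeriv_subset n h),
      norm_zero]
    positivity

end Symbols

section InnerProduct

variable {E : Type*} [NormedAddCommGroup E] [InnerProductSpace ℝ E] [FiniteDimensional ℝ E]

lemma exists_contDiff_pos_eq_norm {ε : ℝ} (hε : 0 < ε) :
    ∃ ρ : E → ℝ, ContDiff ℝ ∞ ρ ∧ (∀ x, 0 < ρ x) ∧ ∀ x, ε ≤ ‖x‖ → ρ x = ‖x‖ := by
  let b : ContDiffBump (0 : E) := ⟨ε / 2, ε, by positivity, by linarith⟩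
  have hpos (x : E) : 0 < ‖x‖ ^ 2 + b x := by
    rcases eq_or_ne x 0 with rfl | hx
    · simp [b.one_of_mem_closedBall (Metric.mem_closedBall_self b.rIn_pos.le)]
    · have := b.nonneg (x := x)
      positivity
  refine ⟨fun x => √(‖x‖ ^ 2 + b x),
    ((contDiff_norm_sq ℝ).add b.contDiff).sqrt fun x => (hpos x).ne',
    fun x => Real.sqrt_pos.2 (hpos x), fun x hx => ?_⟩
  simp only [b.zero_of_le_dist (x := x) (by simpa [b] using hx), add_zero,
    Real.sqrt_sq (norm_nonneg x)]

variable [MeasurableSpace E] [BorelSpace E]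

lemma exists_integral_norm_fourierInv_le {ι : Type*} {ψ : ι → 𝓢(E, ℂ)} {S : Set E}
    (hS : IsCompact S) (hsupp : ∀ i, tsupport (ψ i) ⊆ S)
    (hderiv : ∀ n : ℕ, ∃ B : ℝ, ∀ i x, ‖iteratedFDeriv ℝ n (ψ i) x‖ ≤ B) :
    ∃ C : ℝ, ∀ i, ∫ x, ‖(𝓕⁻ (ψ i) : 𝓢(E, ℂ)) x‖ ≤ C := by
  have hbdd : Bornology.IsVonNBounded ℂ (Set.range ψ) := by
    refine (schwartz_withSeminorms ℂ E ℂ).isVonNBounded_iff_seminorm_bddAbove.2 fun ⟨k, n⟩ => ?_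
    obtain ⟨R, hR⟩ := hS.isBounded.exists_norm_le
    obtain ⟨B, hB⟩ := hderiv n
    refine ⟨|R| ^ k * |B|, ?_⟩
    rintro _ ⟨_, ⟨i, rfl⟩, rfl⟩
    refine SchwartzMap.seminorm_le_bound ℂ k n _ (by positivity) fun x => ?_
    by_cases hx : x ∈ tsupport (ψ i)
    · gcongr
      · exact (hR x (hsupp i hx)).trans (le_abs_self R)
      · exact (hB i x).trans (le_abs_self B)
    · rw [image_eq_zero_of_notMem_tsupport fun h => hx (tsupport_iteratedFDeriv_subset n h),
        norm_zero, mul_zero]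
      positivity
  let T : 𝓢(E, ℂ) →L[ℂ] Lp ℂ 1 (volume : Measure E) :=
    (SchwartzMap.toLpCLM ℂ ℂ 1 volume).comp (FourierTransform.fourierInvCLM ℂ 𝓢(E, ℂ))
  obtain ⟨C, hC⟩ := (NormedSpace.isVonNBounded_iff' ℂ).1 (hbdd.image T)
  refine ⟨C, fun i => ?_⟩
  rw [← SchwartzMap.norm_toLp_one]
  exact hC _ ⟨ψ i, ⟨i, rfl⟩, rfl⟩

/-- Since `ρ ≥ 2δ > 0` on the support of `χ`, the symbols `e^{-τ(ρ - δ)} χ` are still uniformly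
bounded in the Schwartz space, and the factor `e^{-δτ}` is left over. -/
lemma exists_schwartz_fourier_eq_exp_smul {χ : E → ℂ} {ρ : E → ℝ}
    (hχ : ContDiff ℝ ∞ χ) (hχc : HasCompactSupport χ) (hρ : ContDiff ℝ ∞ ρ)
    (hρ0 : ∀ v ∈ tsupport χ, 0 < ρ v) :
    ∃ C > 0, ∃ δ > 0, ∀ τ : ℝ, 0 ≤ τ → ∃ K : 𝓢(E, ℂ),
      (∀ v, 𝓕 (K : E → ℂ) v = Real.exp (-τ * ρ v) • χ v) ∧
      ∫ x, ‖K x‖ ≤ C * Real.exp (-δ * τ) := by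
  obtain ⟨c, hc, hcρ⟩ := hχc.isCompact.exists_forall_le' hρ.continuous.continuousOn hρ0
  have hρδ : ContDiff ℝ ∞ fun v => ρ v - c / 2 := hρ.sub contDiff_const
  have hsmooth (τ : ℝ) : ContDiff ℝ ∞ fun v => Real.exp (-τ * (ρ v - c / 2)) • χ v :=
    (contDiff_const.mul hρδ).exp.smul hχ
  have hcompact (τ : ℝ) : HasCompactSupport fun v => Real.exp (-τ * (ρ v - c / 2)) • χ v :=
    hχc.of_isClosed_subset (isClosed_tsupport _) (tsupport_smul_subset_right _ _)
  have hschwartz (τ : ℝ) :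
      ∃ ψ : 𝓢(E, ℂ), ⇑ψ = fun v => Real.exp (-τ * (ρ v - c / 2)) • χ v :=
    ⟨(hcompact τ).toSchwartzMap (hsmooth τ), rfl⟩
  choose ψ hψ using hschwartz
  have hsupp (τ : Set.Ici (0 : ℝ)) : tsupport (ψ τ) ⊆ tsupport χ := by
    rw [hψ]
    exact tsupport_smul_subset_right _ _
  have hderiv (n : ℕ) :
      ∃ B : ℝ, ∀ (τ : Set.Ici (0 : ℝ)) (x : E), ‖iteratedFDeriv ℝ n (ψ τ) x‖ ≤ B := by
    obtain ⟨B, hB⟩ := exists_forall_norm_iteratedFDeriv_exp_smul_le hχ hχc hρδ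
      (fun v hv => by linarith [hcρ v hv]) n
    refine ⟨B, fun τ x => ?_⟩
    rw [hψ]
    exact hB τ τ.2 x
  obtain ⟨C, hC⟩ := exists_integral_norm_fourierInv_le hχc hsupp hderiv
  refine ⟨|C| + 1, by positivity, c / 2, by positivity, fun τ hτ =>
    ⟨Real.exp (-(c / 2) * τ) • 𝓕⁻ (ψ τ), fun v => ?_, ?_⟩⟩
  · have hF : 𝓕 (Real.exp (-(c / 2) * τ) • 𝓕⁻ (ψ τ)) = Real.exp (-(c / 2) * τ) • ψ τ := by
      rw [FourierTransform.fourier_smul, FourierTransform.fourier_fourierInv_eq]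
    rw [← SchwartzMap.fourier_coe, hF, smul_apply, hψ]
    rw [smul_smul, ← Real.exp_add]
    ring_nf
  · simp only [smul_apply, norm_smul, Real.norm_of_nonneg (Real.exp_pos _).le,
      integral_const_mul]
    rw [mul_comm]
    gcongr
    linarith [hC ⟨τ, hτ⟩, le_abs_self C]

lemma exists_schwartz_fourier_eq_exp_norm {r : ℝ} (hr : 0 < r) (R : ℝ) :
    ∃ C > 0, ∃ δ > 0, ∀ τ : ℝ, 0 ≤ τ → ∃ K : 𝓢(E, ℂ),
      (∀ v, r ≤ ‖v‖ → ‖v‖ ≤ R → 𝓕 (K : E → ℂ) v = Real.exp (-τ * ‖v‖)) ∧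
      ∫ x, ‖K x‖ ≤ C * Real.exp (-δ * τ) := by
  obtain ⟨ρ, hρ, hρ0, hρr⟩ := exists_contDiff_pos_eq_norm (E := E) hr
  let b : ContDiffBump (0 : E) := ⟨|R| + 1, |R| + 2, by positivity, by linarith⟩
  obtain ⟨C, hC, δ, hδ, hK⟩ := exists_schwartz_fourier_eq_exp_smul
    (ofRealCLM.contDiff.comp b.contDiff)
    (b.hasCompactSupport.comp_left (g := ofReal) ofReal_zero) hρ fun v _ => hρ0 v
  refine ⟨C, hC, δ, hδ, fun τ hτ => ?_⟩
  obtain ⟨K, hFK, hKnorm⟩ := hK τ hτ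
  refine ⟨K, fun v hrv hvR => ?_, hKnorm⟩
  have hb : b v = 1 := b.one_of_mem_closedBall <| mem_closedBall_zero_iff.2 <|
    hvR.trans <| (le_abs_self R).trans (le_add_of_nonneg_right zero_le_one)
  simp [hFK, hb, hρr v hrv]

end InnerProduct

/-! ### Convolution inequalities -/

section Young

lemma lintegral_mul_rpow_le {α : Type*} [MeasurableSpace α] {μ : Measure α} {w f : α → ℝ≥0∞}
    (hw : AEMeasurable w μ) (hf : AEMeasurable f μ) {q : ℝ} (hq : 1 ≤ q) :
    (∫⁻ a, w a * f a ∂μ) ^ q ≤ (∫⁻ a, w a ∂μ) ^ (q - 1) * ∫⁻ a, w a * f a ^ q ∂μ := by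
  have hq0 : 0 < q := by linarith
  have hq' : 0 ≤ 1 - 1 / q := sub_nonneg.2 ((div_le_one hq0).2 hq)
  have hsplit (a : α) : w a * f a = w a ^ (1 - 1 / q) * (w a * f a ^ q) ^ (1 / q) := by
    rw [ENNReal.mul_rpow_of_nonneg _ _ (by positivity), ← mul_assoc,
      ← ENNReal.rpow_add_of_nonneg _ _ hq' (by positivity), sub_add_cancel, ENNReal.rpow_one,
      ← ENNReal.rpow_mul, mul_one_div_cancel hq0.ne', ENNReal.rpow_one]
  calc (∫⁻ a, w a * f a ∂μ) ^ q
      ≤ ((∫⁻ a, w a ∂μ) ^ (1 - 1 / q) * (∫⁻ a, w a * f a ^ q ∂μ) ^ (1 / q)) ^ q := by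
        simp_rw [hsplit]
        gcongr
        exact ENNReal.lintegral_mul_norm_pow_le hw (hw.mul (hf.pow_const q)) hq' (by positivity)
          (sub_add_cancel _ _)
    _ = (∫⁻ a, w a ∂μ) ^ (q - 1) * ∫⁻ a, w a * f a ^ q ∂μ := by
        rw [ENNReal.mul_rpow_of_nonneg _ _ hq0.le, ← ENNReal.rpow_mul, ← ENNReal.rpow_mul,
          one_div_mul_cancel hq0.ne', ENNReal.rpow_one, sub_mul, one_mul,
          one_div_mul_cancel hq0.ne']

variable {G : Type*} [MeasurableSpace G] {μ : Measure G}

section AddGroup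

variable [AddGroup G] [MeasurableAdd₂ G] [MeasurableNeg G] [SFinite μ] [μ.IsAddLeftInvariant]
  {f g : G → ℝ≥0∞}

lemma quasiMeasurePreserving_neg_add_const (x : G) :
    Measure.QuasiMeasurePreserving (fun y => -y + x) μ μ :=
  (quasiMeasurePreserving_add_right μ x).comp (quasiMeasurePreserving_neg μ)

lemma lintegral_lconvolution (hf : AEMeasurable f μ) (hg : AEMeasurable g μ) :
    ∫⁻ x, (f ⋆ₗ[μ] g) x ∂μ = (∫⁻ x, f x ∂μ) * ∫⁻ x, g x ∂μ := by
  simp only [lconvolution_def]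
  rw [lintegral_lintegral_swap (by fun_prop), ← lintegral_mul_const'' _ hf]
  refine lintegral_congr fun y => ?_
  have htranslate : AEMeasurable (fun x => g (-y + x)) μ :=
    hg.comp_quasiMeasurePreserving (measurePreserving_add_left μ (-y)).quasiMeasurePreserving
  rw [lintegral_const_mul'' _ htranslate, lintegral_add_left_eq_self]

lemma lintegral_lconvolution_rpow_le (hf : AEMeasurable f μ) (hg : AEMeasurable g μ) {q : ℝ}
    (hq : 1 ≤ q) :
    ∫⁻ x, (f ⋆ₗ[μ] g) x ^ q ∂μ ≤ (∫⁻ x, f x ∂μ) ^ q * ∫⁻ x, g x ^ q ∂μ := by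
  have hgq : AEMeasurable (fun x => g x ^ q) μ := hg.pow_const q
  calc ∫⁻ x, (f ⋆ₗ[μ] g) x ^ q ∂μ
      ≤ ∫⁻ x, (∫⁻ y, f y ∂μ) ^ (q - 1) * (f ⋆ₗ[μ] fun z => g z ^ q) x ∂μ :=
        lintegral_mono fun x => lintegral_mul_rpow_le hf
          (hg.comp_quasiMeasurePreserving (quasiMeasurePreserving_neg_add_const x)) hq
    _ = (∫⁻ y, f y ∂μ) ^ (q - 1) * ((∫⁻ y, f y ∂μ) * ∫⁻ x, g x ^ q ∂μ) := by
        rw [lintegral_const_mul'' _ (aemeasurable_lconvolution hf hgq),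
          lintegral_lconvolution hf hgq]
    _ = (∫⁻ x, f x ∂μ) ^ q * ∫⁻ x, g x ^ q ∂μ := by
        nth_rw 2 [← ENNReal.rpow_one (∫⁻ y, f y ∂μ)]
        rw [← mul_assoc, ← ENNReal.rpow_add_of_nonneg _ _ (sub_nonneg.2 hq) zero_le_one,
          sub_add_cancel]

lemma lconvolution_le_lintegral_mul_essSup (hf : AEMeasurable f μ) (g : G → ℝ≥0∞) (x : G) :
    (f ⋆ₗ[μ] g) x ≤ (∫⁻ y, f y ∂μ) * essSup g μ := by
  rw [lconvolution_def, ← lintegral_mul_const'' _ hf]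
  refine lintegral_mono_ae ?_
  filter_upwards [(quasiMeasurePreserving_neg_add_const x).ae (ENNReal.ae_le_essSup g)] with y hy
  gcongr

lemma eLpNorm_lconvolution_le (hf : AEMeasurable f μ) (hg : AEMeasurable g μ) {p : ℝ≥0∞}
    (hp : 1 ≤ p) :
    eLpNorm (f ⋆ₗ[μ] g) p μ ≤ (∫⁻ x, f x ∂μ) * eLpNorm g p μ := by
  have hp0 : p ≠ 0 := (zero_lt_one.trans_le hp).ne'
  rcases eq_or_ne p ∞ with rfl | hp_top
  · simp only [eLpNorm_exponent_top, eLpNormEssSup, enorm_eq_self]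
    exact essSup_le_of_ae_le _ (.of_forall (lconvolution_le_lintegral_mul_essSup hf g))
  · have hq : 1 ≤ p.toReal := by simpa using ENNReal.toReal_mono hp_top hp
    have hq0 : 0 < p.toReal := by linarith
    simp only [eLpNorm_eq_lintegral_rpow_enorm_toReal hp0 hp_top, enorm_eq_self]
    rw [one_div, ENNReal.rpow_inv_le_iff hq0, ENNReal.mul_rpow_of_nonneg _ _ hq0.le,
      ENNReal.rpow_inv_rpow hq0.ne']
    exact lintegral_lconvolution_rpow_le hf hg hq

end AddGroup

section AddCommGroup

variable [AddCommGroup G] {𝕜 E E' F : Type*} [NontriviallyNormedField 𝕜] [NormedAddCommGroup E]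
  [NormedAddCommGroup E'] [NormedAddCommGroup F] [NormedSpace 𝕜 E] [NormedSpace 𝕜 E']
  [NormedSpace 𝕜 F] [NormedSpace ℝ F]

lemma enorm_convolution_le (L : E →L[𝕜] E' →L[𝕜] F) (f : G → E) (g : G → E') (x : G) :
    ‖(f ⋆[L, μ] g) x‖ₑ ≤ ((fun y => ‖L‖ₑ * ‖f y‖ₑ) ⋆ₗ[μ] fun y => ‖g y‖ₑ) x := by
  refine (enorm_integral_le_lintegral_enorm _).trans (lintegral_mono fun y => ?_)
  simp only [neg_add_eq_sub]
  exact (ContinuousLinearMap.le_opENorm _ _).trans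
    (mul_le_mul_left (ContinuousLinearMap.le_opENorm _ _) _)

lemma eLpNorm_convolution_le [MeasurableAdd₂ G] [MeasurableNeg G] [SFinite μ]
    [μ.IsAddLeftInvariant] (L : E →L[𝕜] E' →L[𝕜] F) {f : G → E} {g : G → E'}
    (hf : AEStronglyMeasurable f μ) (hg : AEStronglyMeasurable g μ) {p : ℝ≥0∞} (hp : 1 ≤ p) :
    eLpNorm (f ⋆[L, μ] g) p μ ≤ ‖L‖ₑ * (∫⁻ x, ‖f x‖ₑ ∂μ) * eLpNorm g p μ := by
  rw [← lintegral_const_mul'' _ hf.enorm, ← eLpNorm_enorm g]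
  exact (eLpNorm_mono_enorm (enorm_convolution_le L f g)).trans
    (eLpNorm_lconvolution_le (hf.enorm.const_mul _) hg.enorm hp)

end AddCommGroup

end Young

/-! ### Fourier transform of dilations and convolutions -/

section Dilation

variable {E F : Type*} [NormedAddCommGroup E] [NormedSpace ℝ E] [FiniteDimensional ℝ E]
  [MeasurableSpace E] [BorelSpace E] [NormedAddCommGroup F] [NormedSpace ℝ F]
  {μ : Measure E} [μ.IsAddHaarMeasure] {c : ℝ}

lemma integrable_exp_neg_mul_norm (hc : 0 < c) :
    Integrable (fun v => Real.exp (-c * ‖v‖)) μ := by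
  set n := finrank ℝ E + 1
  have hdecay : Integrable (fun v : E => (1 + ‖v‖) ^ (-(n : ℝ))) μ :=
    integrable_one_add_norm (by simp [n])
  refine (hdecay.const_mul (Real.exp c * (n.factorial / c ^ n))).mono'
    (by fun_prop) (.of_forall fun v => ?_)
  have hpow := Real.pow_div_factorial_le_exp (c * (1 + ‖v‖)) (by positivity) n
  rw [Real.norm_of_nonneg (Real.exp_pos _).le, Real.rpow_neg (by positivity), Real.rpow_natCast,
    mul_assoc, ← div_le_iff₀' (Real.exp_pos c), ← Real.exp_sub]
  calc Real.exp (-c * ‖v‖ - c) = (Real.exp (c * (1 + ‖v‖)))⁻¹ := by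
        rw [← Real.exp_neg]
        ring_nf
    _ ≤ ((c * (1 + ‖v‖)) ^ n / n.factorial)⁻¹ := by gcongr
    _ = n.factorial / c ^ n * ((1 + ‖v‖) ^ n)⁻¹ := by
        rw [inv_div, mul_pow, div_mul_eq_div_div, div_eq_mul_inv _ ((1 + ‖v‖) ^ n)]

/-- The dilation `x ↦ c^{dim E} k(c x)`, normalized to preserve integrals for `c > 0`. -/
def l1Dilation (c : ℝ) (k : E → F) (x : E) : F := c ^ finrank ℝ E • k (c • x)

lemma integral_l1Dilation (hc : 0 < c) (k : E → F) :
    ∫ x, l1Dilation c k x ∂μ = ∫ x, k x ∂μ := by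
  simp only [l1Dilation]
  rw [integral_smul, Measure.integral_comp_smul_of_nonneg μ k c (hR := hc.le), smul_smul,
    mul_inv_cancel₀ (by positivity), one_smul]

lemma integral_norm_l1Dilation (hc : 0 < c) (k : E → F) :
    ∫ x, ‖l1Dilation c k x‖ ∂μ = ∫ x, ‖k x‖ ∂μ := by
  rw [← integral_l1Dilation hc fun x => ‖k x‖]
  simp only [l1Dilation, norm_smul, norm_pow, Real.norm_of_nonneg hc.le, smul_eq_mul]

lemma integrable_l1Dilation (hc : c ≠ 0) {k : E → F} (hk : Integrable k μ) :
    Integrable (l1Dilation c k) μ :=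
  (hk.comp_smul hc).smul _

end Dilation

section FourierCalculus

variable {E : Type*} [NormedAddCommGroup E] [InnerProductSpace ℝ E] [FiniteDimensional ℝ E]
  [MeasurableSpace E] [BorelSpace E]

lemma continuous_fourier_of_integrable {f : E → ℂ} (hf : Integrable f) : Continuous (𝓕 f) :=
  VectorFourier.fourierIntegral_continuous Real.continuous_fourierChar
    (by simp only [innerₗ_apply_apply]; fun_prop) hf

lemma fourierInv_sub_eq (m : E → ℂ) (x y : E) :
    𝓕⁻ m (x - y) = 𝓕 (fun v => Real.fourierChar ⟪v, x⟫ • m v) y := by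
  rw [Real.fourierInv_eq, Real.fourier_eq]
  refine integral_congr_ae (.of_forall fun v => ?_)
  simp only [smul_smul, ← AddChar.map_add_eq_mul, inner_sub_right]
  ring_nf

/-- The Fourier transform is self-adjoint, and `y ↦ 𝓕⁻ m (x - y)` is the Fourier transform of a
modulation of `m`. -/
lemma convolution_fourierInv {k m : E → ℂ} (hk : Integrable k) (hm : Integrable m) :
    k ⋆[ContinuousLinearMap.mul ℂ ℂ, volume] 𝓕⁻ m = 𝓕⁻ fun v => 𝓕 k v * m v := by
  ext x
  have hmod : Integrable fun v => Real.fourierChar ⟪v, x⟫ • m v := by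
    simpa using (Real.fourierIntegral_convergent_iff (μ := volume) (f := m) (-x)).2 hm
  have hadj := VectorFourier.integral_fourierIntegral_smul_eq_flip (L := innerₗ E)
    Real.continuous_fourierChar (by simp only [innerₗ_apply_apply]; fun_prop) hk hmod
  simp only [flip_innerₗ] at hadj
  calc (k ⋆[ContinuousLinearMap.mul ℂ ℂ, volume] 𝓕⁻ m) x
      = ∫ y, k y * 𝓕 (fun v => Real.fourierChar ⟪v, x⟫ • m v) y := by
        simp only [convolution_def, fourierInv_sub_eq, ContinuousLinearMap.mul_apply']
    _ = ∫ v, 𝓕 k v * (Real.fourierChar ⟪v, x⟫ • m v) := hadj.symm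
    _ = 𝓕⁻ (fun v => 𝓕 k v * m v) x := by
        simp only [Real.fourierInv_eq, mul_smul_comm]

lemma integrable_mul_fourier {m f : E → ℂ} (hm : Integrable m) (hf : Integrable f) :
    Integrable fun v => m v * 𝓕 f v :=
  hm.mul_bdd (continuous_fourier_of_integrable hf).aestronglyMeasurable
    (.of_forall fun v => VectorFourier.norm_fourierIntegral_le_integral_norm _ _ _ _ v)

lemma fourier_l1Dilation {c : ℝ} (hc : 0 < c) (k : E → ℂ) (v : E) :
    𝓕 (l1Dilation c k) v = 𝓕 k (c⁻¹ • v) := by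
  rw [Real.fourier_eq, Real.fourier_eq, ← integral_l1Dilation hc fun x => _ • k x]
  refine integral_congr_ae (.of_forall fun x => ?_)
  simp only [l1Dilation, real_inner_smul_left, real_inner_smul_right,
    inv_mul_cancel_left₀ hc.ne', smul_comm _ (c ^ _)]

lemma integrable_fourier_schwartz (k : 𝓢(E, ℂ)) : Integrable (𝓕 (k : E → ℂ)) := by
  rw [← SchwartzMap.fourier_coe]
  exact (𝓕 k).integrable

lemma fourierInv_fourier_l1Dilation {c : ℝ} (hc : 0 < c) (k : 𝓢(E, ℂ)) :
    𝓕⁻ (fun v => 𝓕 (k : E → ℂ) (c⁻¹ • v)) = l1Dilation c k := by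
  have hF : 𝓕 (l1Dilation c k) = fun v => 𝓕 (k : E → ℂ) (c⁻¹ • v) :=
    funext (fourier_l1Dilation hc k)
  rw [← hF]
  refine Continuous.fourierInv_fourier_eq ?_ (integrable_l1Dilation hc.ne' k.integrable) ?_
  · unfold l1Dilation
    have := k.continuous
    fun_prop
  · rw [hF]
    exact (integrable_fourier_schwartz k).comp_smul (inv_ne_zero hc.ne')

end FourierCalculus

/-! ### Frequency blocks of the Poisson extension -/

section Blocks

variable {d : ℕ}

/-- The Poisson extension `u(x, t) = e^{-t|∇|} a (x)` of `a`, curried with time first. -/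
def poissonExtension (a : Rd d → ℂ) (t : ℝ) (x : Rd d) : ℂ :=
  (((2 * Real.pi) ^ d : ℝ) : ℂ)⁻¹ *
    ∫ ξ : Rd d, Complex.exp (Complex.I * (↑(⟪x, ξ⟫) : ℂ)) *
      Complex.exp (-(↑(t * ‖ξ‖) : ℂ)) * FT a ξ

lemma FT_eq_fourier (f : Rd d → ℂ) (ξ : Rd d) : FT f ξ = 𝓕 f ((2 * Real.pi)⁻¹ • ξ) := by
  rw [Real.fourier_eq', FT]
  refine integral_congr_ae (.of_forall fun x => ?_)
  have hphase : -2 * Real.pi * ⟪x, (2 * Real.pi)⁻¹ • ξ⟫ = -⟪x, ξ⟫ := by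
    rw [real_inner_smul_right]
    field_simp
  simp only [hphase, smul_eq_mul]
  push_cast
  ring_nf

lemma poissonExtension_eq_fourierInv (a : Rd d → ℂ) (t : ℝ) :
    poissonExtension a t =
      𝓕⁻ fun v => ((Real.exp (-(2 * Real.pi * t) * ‖v‖) : ℝ) : ℂ) * 𝓕 a v := by
  ext x
  rw [poissonExtension, Real.fourierInv_eq', ← integral_l1Dilation (c := (2 * Real.pi)⁻¹)
    (by positivity) fun v => Complex.exp _ • _, ← integral_const_mul]
  refine integral_congr_ae (.of_forall fun ξ => ?_)
  have hphase : 2 * Real.pi * ⟪(2 * Real.pi)⁻¹ • ξ, x⟫ = ⟪x, ξ⟫ := by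
    rw [real_inner_smul_left, real_inner_comm]
    field_simp
  have hnorm : -(2 * Real.pi * t) * ‖(2 * Real.pi)⁻¹ • ξ‖ = -(t * ‖ξ‖) := by
    rw [norm_smul, Real.norm_of_nonneg (by positivity)]
    field_simp
  simp only [l1Dilation, hphase, hnorm, FT_eq_fourier, finrank_euclideanSpace_fin, real_smul,
    smul_eq_mul, inv_pow, ofReal_inv, ofReal_neg, ofReal_exp]
  rw [mul_comm (ofReal _) I]
  ring

namespace LPData

variable (P : LPData d)

lemma norm_mem_Icc_of_fourier_ne_zero {v : Rd d} (hv : 𝓕 (P.φ : Rd d → ℂ) v ≠ 0) :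
    ‖v‖ ∈ Set.Icc (1 / (4 * Real.pi)) (1 / Real.pi) := by
  have hpi := Real.pi_pos
  have hFT : FT P.φ ((2 * Real.pi) • v) ≠ 0 := by
    rwa [FT_eq_fourier, inv_smul_smul₀ (by positivity)]
  obtain ⟨hlower, hupper⟩ := P.hsupp _ hFT
  rw [norm_smul, Real.norm_of_nonneg (by positivity)] at hlower hupper
  constructor
  · rw [div_le_iff₀ (by positivity)]
    linarith
  · rw [le_div_iff₀ hpi]
    linarith

end LPData

lemma LP_eq_convolution (P : LPData d) (j : ℤ) (f : Rd d → ℂ) :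
    LP P j f = l1Dilation ((2 : ℝ) ^ j) P.φ ⋆[ContinuousLinearMap.mul ℂ ℂ, volume] f := by
  ext x
  simp only [LP, l1Dilation, convolution_def, ContinuousLinearMap.mul_apply',
    finrank_euclideanSpace_fin, real_smul, mul_comm (d : ℤ), zpow_mul, zpow_natCast]

lemma LP_fourierInv (P : LPData d) (j : ℤ) {m : Rd d → ℂ} (hm : Integrable m) :
    LP P j (𝓕⁻ m) = 𝓕⁻ fun v => 𝓕 (P.φ : Rd d → ℂ) (((2 : ℝ) ^ j)⁻¹ • v) * m v := by
  have h2 : (0 : ℝ) < 2 ^ j := by positivity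
  rw [LP_eq_convolution, convolution_fourierInv (integrable_l1Dilation h2.ne' P.φ.integrable) hm]
  simp only [fourier_l1Dilation h2]

lemma LP_eq_fourierInv (P : LPData d) (j : ℤ) {a : Rd d → ℂ} (ha : Integrable a) :
    LP P j a = 𝓕⁻ fun v => 𝓕 (P.φ : Rd d → ℂ) (((2 : ℝ) ^ j)⁻¹ • v) * 𝓕 a v := by
  have h2 : (0 : ℝ) < 2 ^ j := by positivity
  rw [LP_eq_convolution, ← fourierInv_fourier_l1Dilation h2, ← convolution_flip,
    ContinuousLinearMap.flip_mul,
    convolution_fourierInv ha ((integrable_fourier_schwartz P.φ).comp_smul (inv_ne_zero h2.ne'))]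
  simp only [mul_comm]

lemma integrable_LP (P : LPData d) (j : ℤ) {a : Rd d → ℂ} (ha : Integrable a) :
    Integrable (LP P j a) := by
  rw [LP_eq_convolution]
  exact (integrable_l1Dilation (by positivity) P.φ.integrable).integrable_convolution _ ha

/-- On the frequency support of the block, `K` has the Poisson multiplier as Fourier transform. -/
lemma LP_poissonExtension_eq_convolution (P : LPData d) (j : ℤ) {a K : Rd d → ℂ} {t : ℝ}
    (ha : Integrable a) (ht : 0 < t) (hK : Integrable K)
    (hFK : ∀ v, ‖v‖ ∈ Set.Icc (1 / (4 * Real.pi)) (1 / Real.pi) →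
      𝓕 K v = Real.exp (-(2 * Real.pi * (2 ^ j * t)) * ‖v‖)) :
    LP P j (poissonExtension a t) =
      l1Dilation ((2 : ℝ) ^ j) K ⋆[ContinuousLinearMap.mul ℂ ℂ, volume] LP P j a := by
  have h2 : (0 : ℝ) < 2 ^ j := by positivity
  have hblock : Integrable fun v => 𝓕 (P.φ : Rd d → ℂ) (((2 : ℝ) ^ j)⁻¹ • v) * 𝓕 a v :=
    integrable_mul_fourier ((integrable_fourier_schwartz P.φ).comp_smul (inv_ne_zero h2.ne')) ha
  have hsymbol : Integrable fun v => ((Real.exp (-(2 * Real.pi * t) * ‖v‖) : ℝ) : ℂ) * 𝓕 a v :=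
    integrable_mul_fourier (integrable_exp_neg_mul_norm (by positivity)).ofReal ha
  rw [poissonExtension_eq_fourierInv, LP_fourierInv P j hsymbol, LP_eq_fourierInv P j ha,
    convolution_fourierInv (integrable_l1Dilation h2.ne' hK) hblock]
  congr 1 with v
  rw [fourier_l1Dilation h2]
  by_cases hv : 𝓕 (P.φ : Rd d → ℂ) (((2 : ℝ) ^ j)⁻¹ • v) = 0
  · simp only [hv, zero_mul, mul_zero]
  · have hexp : -(2 * Real.pi * (2 ^ j * t)) * ‖((2 : ℝ) ^ j)⁻¹ • v‖ =
        -(2 * Real.pi * t) * ‖v‖ := by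
      rw [norm_smul, norm_inv, Real.norm_of_nonneg h2.le]
      field_simp
    rw [hFK _ (P.norm_mem_Icc_of_fourier_ne_zero hv), hexp, mul_left_comm]

lemma exists_eLpNorm_LP_poissonExtension_le (d : ℕ) :
    ∃ C > 0, ∃ δ > 0, ∀ (P : LPData d) (j : ℤ) (a : Rd d → ℂ) (t : ℝ) (p : ℝ≥0∞),
      Integrable a → 0 < t → 1 ≤ p →
      eLpNorm (LP P j (poissonExtension a t)) p volume ≤
        ENNReal.ofReal (C * Real.exp (-(δ * 2 ^ j) * t)) * eLpNorm (LP P j a) p volume := by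
  obtain ⟨C, hC, δ, hδ, hkernel⟩ := exists_schwartz_fourier_eq_exp_norm (E := Rd d)
    (r := 1 / (4 * Real.pi)) (by positivity) (1 / Real.pi)
  refine ⟨C, hC, δ * (2 * Real.pi), by positivity, fun P j a t p ha ht hp => ?_⟩
  have h2 : (0 : ℝ) < 2 ^ j := by positivity
  obtain ⟨K, hFK, hK⟩ := hkernel (2 * Real.pi * (2 ^ j * t)) (by positivity)
  rw [LP_poissonExtension_eq_convolution P j ha ht K.integrable fun v hv => hFK v hv.1 hv.2]
  have hdilK : Integrable (l1Dilation ((2 : ℝ) ^ j) K) := integrable_l1Dilation h2.ne' K.integrable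
  refine (eLpNorm_convolution_le _ hdilK.aestronglyMeasurable
    (integrable_LP P j ha).aestronglyMeasurable hp).trans ?_
  have hone : ‖ContinuousLinearMap.mul ℂ ℂ‖ₑ = 1 := by
    rw [← ofReal_norm, ContinuousLinearMap.opNorm_mul, ENNReal.ofReal_one]
  rw [hone, one_mul, ← ofReal_integral_norm_eq_lintegral_enorm hdilK, integral_norm_l1Dilation h2]
  gcongr
  exact hK.trans_eq (by ring_nf)

end Blocks

/-! ### Norms in time and frequency -/

section Norms

lemma ellNorm_mono (r : ℝ≥0∞) {a b : ℤ → ℝ≥0∞} (h : ∀ j, a j ≤ b j) :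
    ellNorm r a ≤ ellNorm r b := by
  unfold ellNorm
  split_ifs
  · exact iSup_mono h
  · gcongr with j
    exact h j

lemma ellNorm_const_mul {r : ℝ≥0∞} (hr : r ≠ 0) (c : ℝ≥0∞) (a : ℤ → ℝ≥0∞) :
    ellNorm r (fun j => c * a j) = c * ellNorm r a := by
  unfold ellNorm
  split_ifs with htop
  · rw [ENNReal.mul_iSup]
  · have hr0 : 0 < r.toReal := ENNReal.toReal_pos hr htop
    simp only [ENNReal.mul_rpow_of_nonneg _ _ hr0.le, ENNReal.tsum_mul_left]
    rw [ENNReal.mul_rpow_of_nonneg _ _ (by positivity), ← ENNReal.rpow_mul,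
      mul_one_div_cancel hr0.ne', ENNReal.rpow_one]

lemma lintegral_Ioi_exp_neg_mul {c : ℝ} (hc : 0 < c) :
    ∫⁻ t in Set.Ioi (0 : ℝ), ENNReal.ofReal (Real.exp (-c * t)) = ENNReal.ofReal c⁻¹ := by
  rw [← ofReal_integral_eq_lintegral_ofReal (integrableOn_exp_mul_Ioi (neg_lt_zero.2 hc) 0)
    (.of_forall fun t => (Real.exp_pos _).le), integral_exp_mul_Ioi (neg_lt_zero.2 hc)]
  simp only [mul_zero, Real.exp_zero, neg_div_neg_eq, one_div]

lemma lintegral_Ioi_rpow_le_of_exp_decay {h : ℝ → ℝ≥0∞} {A : ℝ≥0∞} {q c : ℝ} (hq : 1 ≤ q)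
    (hc : 0 < c) (hh : ∀ t, 0 < t → h t ≤ ENNReal.ofReal (Real.exp (-c * t)) * A) :
    ∫⁻ t in Set.Ioi (0 : ℝ), h t ^ q ≤ ENNReal.ofReal c⁻¹ * A ^ q := by
  have hq0 : 0 < q := by linarith
  calc ∫⁻ t in Set.Ioi (0 : ℝ), h t ^ q
      ≤ ∫⁻ t in Set.Ioi (0 : ℝ), ENNReal.ofReal (Real.exp (-(c * q) * t)) * A ^ q := by
        refine setLIntegral_mono' measurableSet_Ioi fun t ht => ?_
        refine (ENNReal.rpow_le_rpow (hh t ht) hq0.le).trans_eq ?_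
        rw [ENNReal.mul_rpow_of_nonneg _ _ hq0.le,
          ENNReal.ofReal_rpow_of_nonneg (Real.exp_pos _).le hq0.le, ← Real.exp_mul]
        ring_nf
    _ = ENNReal.ofReal (c * q)⁻¹ * A ^ q := by
        rw [lintegral_mul_const _ (by fun_prop), lintegral_Ioi_exp_neg_mul (by positivity)]
    _ ≤ ENNReal.ofReal c⁻¹ * A ^ q := by
        gcongr
        exact le_mul_of_one_le_right hc.le hq

lemma LqLp_le_of_exp_decay {d : ℕ} {q p A : ℝ≥0∞} (hq : 1 ≤ q) {g : ℝ → Rd d → ℂ} {c : ℝ}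
    (hc : 0 < c)
    (hg : ∀ t, 0 < t → eLpNorm (g t) p volume ≤ ENNReal.ofReal (Real.exp (-c * t)) * A) :
    LqLp q p g ≤ ENNReal.ofReal c⁻¹ ^ (1 / q).toReal * A := by
  rcases eq_or_ne q ∞ with rfl | hq_top
  · simp only [LqLp, if_true, one_div, ENNReal.inv_top, ENNReal.toReal_zero, ENNReal.rpow_zero,
      one_mul]
    refine essSup_le_of_ae_le _ (ae_restrict_of_forall_mem measurableSet_Ioi fun t ht => ?_)
    refine (hg t ht).trans (mul_le_of_le_one_left' ?_)
    rw [ENNReal.ofReal_le_one, Real.exp_le_one_iff]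
    nlinarith [Set.mem_Ioi.1 ht]
  · have hq1 : 1 ≤ q.toReal := by simpa using ENNReal.toReal_mono hq_top hq
    have hq0 : 0 < q.toReal := by linarith
    rw [LqLp, if_neg hq_top, ENNReal.toReal_div, ENNReal.toReal_one]
    refine (ENNReal.rpow_le_rpow (lintegral_Ioi_rpow_le_of_exp_decay hq1 hc hg)
      (by positivity)).trans_eq ?_
    rw [ENNReal.mul_rpow_of_nonneg _ _ (by positivity), ← ENNReal.rpow_mul,
      mul_one_div_cancel hq0.ne', ENNReal.rpow_one]

lemma two_rpow_mul_rpow_inv_le {δ β : ℝ} (hδ : 0 < δ) (hβ0 : 0 ≤ β) (hβ1 : β ≤ 1) (s : ℝ)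
    (j : ℤ) :
    ENNReal.ofReal (2 ^ ((s + β) * j)) * ENNReal.ofReal (δ * 2 ^ j)⁻¹ ^ β ≤
      ENNReal.ofReal (max 1 δ⁻¹) * ENNReal.ofReal (2 ^ (s * j)) := by
  have hpow : (((2 : ℝ) ^ j)⁻¹) ^ β = 2 ^ (-(β * j)) := by
    rw [← Real.rpow_intCast, ← Real.rpow_neg zero_le_two, ← Real.rpow_mul zero_le_two]
    ring_nf
  have hδβ : δ⁻¹ ^ β ≤ max 1 δ⁻¹ :=
    (Real.rpow_le_rpow (by positivity) (le_max_right 1 _) hβ0).trans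
      (Real.rpow_le_self_of_one_le (le_max_left _ _) hβ1)
  rw [ENNReal.ofReal_rpow_of_nonneg (by positivity) hβ0, ← ENNReal.ofReal_mul (by positivity),
    ← ENNReal.ofReal_mul (by positivity)]
  refine ENNReal.ofReal_le_ofReal ?_
  calc (2 : ℝ) ^ ((s + β) * j) * (δ * 2 ^ j)⁻¹ ^ β
      = δ⁻¹ ^ β * 2 ^ (s * j) := by
        rw [mul_inv, Real.mul_rpow (by positivity) (by positivity), hpow, mul_left_comm,
          ← Real.rpow_add two_pos]
        ring_nf
    _ ≤ max 1 δ⁻¹ * 2 ^ (s * j) := by gcongr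

end Norms

theorem poisson_extension_chemin_lerner_estimate_general (d : ℕ) :
    ∃ C > (0 : ℝ), ∀ (P : LPData d) (s : ℝ) (p r q : ℝ≥0∞), 1 ≤ p → r ≠ 0 → 1 ≤ q →
      ∀ a : Rd d → ℂ, Integrable a →
        CL P (s + (1 / q).toReal) q p r (poissonExtension a) ≤
          ENNReal.ofReal C * besov P s p r a := by
  obtain ⟨C, hC, δ, hδ, hblock⟩ := exists_eLpNorm_LP_poissonExtension_le d
  refine ⟨max 1 δ⁻¹ * C, by positivity, fun P s p r q hp hr hq a ha => ?_⟩
  rw [CL, besov, ← ellNorm_const_mul hr]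
  refine ellNorm_mono r fun j => ?_
  have htime : LqLp q p (fun t => LP P j (poissonExtension a t)) ≤
      ENNReal.ofReal (δ * 2 ^ j)⁻¹ ^ (1 / q).toReal *
        (ENNReal.ofReal C * eLpNorm (LP P j a) p volume) :=
    LqLp_le_of_exp_decay hq (by positivity) fun t ht => (hblock P j a t p ha ht hp).trans_eq <| by
      rw [mul_comm C, ENNReal.ofReal_mul (Real.exp_pos _).le, mul_assoc]
  have hβ : (1 / q).toReal ≤ 1 := ENNReal.toReal_le_of_le_ofReal zero_le_one (by simpa using hq)
  calc _ ≤ ENNReal.ofReal (2 ^ ((s + (1 / q).toReal) * j)) *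
          (ENNReal.ofReal (δ * 2 ^ j)⁻¹ ^ (1 / q).toReal *
            (ENNReal.ofReal C * eLpNorm (LP P j a) p volume)) := by gcongr
    _ ≤ ENNReal.ofReal (max 1 δ⁻¹) * ENNReal.ofReal (2 ^ (s * j)) *
          (ENNReal.ofReal C * eLpNorm (LP P j a) p volume) := by
        rw [← mul_assoc]
        exact mul_le_mul_left (two_rpow_mul_rpow_inv_le hδ ENNReal.toReal_nonneg hβ s j) _
    _ = _ := by
        rw [ENNReal.ofReal_mul (by positivity)]
        ring

/-- Maximal regularity estimate for the boundary semigroup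
`e^{-t|∇|}` in Chemin–Lerner spaces:
`‖e^{-t|∇|} a‖_{L̃^{q₁}(Ḃ^{s+1/q₁}_{p,r})} ≤ C ‖a‖_{Ḃ^s_{p,r}}`. -/
theorem poisson_extension_chemin_lerner_estimate (d : ℕ) (hd : 1 ≤ d) (P : LPData d) :
    ∃ C > (0:ℝ), ∀ s : ℝ, ∀ p r q₁ : ℝ≥0∞, 1 ≤ p → 1 ≤ r → 1 ≤ q₁ →
      ∀ a : SchwartzMap (Rd d) ℂ,
      CL P (s + (1/q₁).toReal) q₁ p r
          (fun t x =>
            (((2 * Real.pi) ^ d : ℝ) : ℂ)⁻¹ *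
              ∫ ξ : Rd d, Complex.exp (Complex.I * (↑(⟪x, ξ⟫) : ℂ)) *
                Complex.exp (-(↑(t * ‖ξ‖) : ℂ)) * FT (⇑a) ξ)
        ≤ ENNReal.ofReal C * besov P s p r (⇑a) := by
  obtain ⟨C, hC, hle⟩ := poisson_extension_chemin_lerner_estimate_general d
  exact ⟨C, hC, fun s p r q₁ hp hr hq₁ a =>
    hle P s p r q₁ hp (zero_lt_one.trans_le hr).ne' hq₁ a a.integrable⟩
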